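/- arXiv:math/0610832 — 2 statements merged into one kernel-verified Lean document; each statement's English description precedes it below -/
import Mathlib

section
/- Let M be a magma with a two-sided unit element e (e*x = x and x*e = x for all x in M). If M satisfies the generalized entropic property, then M is medial; moreover, the witnessing terms necessarily satisfy t(x,y) = s(x,y) = x*y for all x,y in M. -/
/-- Evaluation of a binary term (an element of the free magma on two
generators) in a magma `M` under the assignment `0 ↦ a`, `1 ↦ b`. -/
def evalBin {M : Type*} [Mul M] (t : FreeMagma (Fin 2)) (a b : M) : M :=
  FreeMagma.lift ![a, b] t

section Idempotent

variable {M : Type*} [Mul M] {a : M}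

theorem freeMagma_lift_const {α : Type*} (ha : IsIdempotentElem a) (t : FreeMagma α) :
    FreeMagma.lift (fun _ => a) t = a := by
  induction t using FreeMagma.recOnMul with
  | ih1 i => exact FreeMagma.lift_of _ i
  | ih2 p q hp hq => rw [map_mul, hp, hq, ha.eq]

theorem evalBin_self (ha : IsIdempotentElem a) (t : FreeMagma (Fin 2)) : evalBin t a a = a := by
  rw [evalBin, Matrix.vec_single_eq_const, Matrix.vecCons_const, freeMagma_lift_const ha]

end Idempotent

section GeneralizedEntropic

variable {M : Type*} [Mul M] {e : M} {f g : M → M → M}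

theorem left_op_eq_mul_of_generalized_entropic (mul_unit : ∀ x : M, x * e = x) (hg : g e e = e)
    (entropic : ∀ x y u v : M, (x * y) * (u * v) = f x u * g y v) (x y : M) :
    f x y = x * y :=
  calc
    f x y = f x y * g e e := by rw [hg, mul_unit]
    _ = (x * e) * (y * e) := (entropic x e y e).symm
    _ = x * y := by rw [mul_unit, mul_unit]

theorem right_op_eq_mul_of_generalized_entropic (unit_mul : ∀ x : M, e * x = x) (hf : f e e = e)
    (entropic : ∀ x y u v : M, (x * y) * (u * v) = f x u * g y v) (x y : M) :
    g x y = x * y :=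
  calc
    g x y = f e e * g x y := by rw [hf, unit_mul]
    _ = (e * x) * (e * y) := (entropic e x e y).symm
    _ = x * y := by rw [unit_mul, unit_mul]

theorem stmt_12_general (unit_mul : ∀ x : M, e * x = x) (mul_unit : ∀ x : M, x * e = x)
    (hf : f e e = e) (hg : g e e = e)
    (entropic : ∀ x y u v : M, (x * y) * (u * v) = f x u * g y v) :
    (∀ x y u v : M, (x * y) * (u * v) = (x * u) * (y * v)) ∧
    (∀ x y : M, f x y = x * y) ∧
    (∀ x y : M, g x y = x * y) := by
  have f_eq_mul := left_op_eq_mul_of_generalized_entropic mul_unit hg entropic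
  have g_eq_mul := right_op_eq_mul_of_generalized_entropic unit_mul hf entropic
  refine ⟨fun x y u v => ?medial, f_eq_mul, g_eq_mul⟩
  case medial => rw [entropic, f_eq_mul, g_eq_mul]

end GeneralizedEntropic

/-- A magma with a two-sided unit satisfying the generalized entropic property
with terms `t`, `s` is medial, and necessarily `t(x,y) = s(x,y) = x*y`. -/
theorem stmt_12 {M : Type*} [Mul M] (e : M)
    (he₁ : ∀ x : M, e * x = x) (he₂ : ∀ x : M, x * e = x)
    (t s : FreeMagma (Fin 2))
    (hGEP : ∀ x y u v : M, (x * y) * (u * v) = evalBin t x u * evalBin s y v) :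
    (∀ x y u v : M, (x * y) * (u * v) = (x * u) * (y * v)) ∧
    (∀ x y : M, evalBin t x y = x * y) ∧
    (∀ x y : M, evalBin s x y = x * y) :=
  stmt_12_general he₁ he₂ (evalBin_self (he₁ e) t) (evalBin_self (he₁ e) s) hGEP
end

section
/- Let M be a commutative magma satisfying the generalized entropic property with binary terms t, s, i.e., (x*y)*(u*v) = t(x,u)*s(y,v) for all x,y,u,v in M. If at least one of the terms t, s is linear, or at least one of them is M-symmetric (meaning t(x,y) = t(y,x) for all x,y in M, respectively s(x,y) = s(y,x) for all x,y in M), then M is medial. -/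
/-- The number of occurrences of the generator `v` in a binary term. -/
def varCount (v : Fin 2) : FreeMagma (Fin 2) → ℕ
  | .of w => if w = v then 1 else 0
  | .mul t₁ t₂ => varCount v t₁ + varCount v t₂

/-- A binary term is linear if each generator occurs in it at most once. -/
def IsLinear (t : FreeMagma (Fin 2)) : Prop := ∀ v : Fin 2, varCount v t ≤ 1

/-!
The quaternary operation `(x * y) * (u * v)` of a commutative magma is invariant under exchanging
`x` with `y`, `u` with `v`, and the two factors, so in `(x * y) * (u * v) = f x u * g y v` the roles
of `f` and `g` may be exchanged, and the arguments of both may be reversed simultaneously.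
If `f` is symmetric, then the operation is also invariant under exchanging `x` with `u`, hence under
all permutations. If `f` ignores its second argument, then the operation does not depend on `u`,
hence by invariance on none of its arguments. Up to commutativity, a linear term is a
generator or a product of the two generators, so it falls under one of these two cases.
-/

/-- The generalized entropic property of a magma, for arbitrary binary operations `f` and `g`
in place of the operations induced by terms. -/
def GeneralizedEntropic {M : Type*} [Mul M] (f g : M → M → M) : Prop :=
  ∀ x y u v : M, (x * y) * (u * v) = f x u * g y v

/-- A magma is medial (or entropic) if its multiplication satisfies the exchange law. -/
def IsMedial (M : Type*) [Mul M] : Prop :=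
  ∀ x y u v : M, (x * y) * (u * v) = (x * u) * (y * v)

/-- A function of two arguments is essentially unary if it depends on at most one of them, as does
the evaluation of a binary term in which only one generator occurs. -/
def EssentiallyUnary {α β γ : Type*} (f : α → β → γ) : Prop :=
  (∀ x y y', f x y = f x y') ∨ ∀ x x' y, f x y = f x' y

namespace GeneralizedEntropic

variable {M : Type*} [CommMagma M] {f g : M → M → M}

theorem symm (h : GeneralizedEntropic f g) : GeneralizedEntropic g f := fun x y u v => by
  rw [mul_comm x y, mul_comm u v, h, mul_comm]

theorem swap (h : GeneralizedEntropic f g) :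
    GeneralizedEntropic (Function.swap f) (Function.swap g) := fun x y u v => by
  rw [mul_comm, h]

theorem isMedial_of_symmetric (h : GeneralizedEntropic f g) (hf : ∀ x y, f x y = f y x) :
    IsMedial M := fun x y u v =>
  calc
    (x * y) * (u * v) = (x * y) * (v * u) := by rw [mul_comm u v]
    _ = f x v * g y u := h x y v u
    _ = f v x * g y u := by rw [hf]
    _ = (v * y) * (x * u) := (h v y x u).symm
    _ = (x * u) * (y * v) := by rw [mul_comm, mul_comm v y]

theorem mul_mul_mul_const (h : GeneralizedEntropic f g) (hf : ∀ x y y', f x y = f x y')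
    (x y u v x' y' u' v' : M) : (x * y) * (u * v) = (x' * y') * (u' * v') := by
  have replace_third (x y u u' v : M) : (x * y) * (u * v) = (x * y) * (u' * v) := by
    rw [h, hf x u u', ← h]
  have replace_right (x y u v u' v' : M) : (x * y) * (u * v) = (x * y) * (u' * v') := by
    rw [replace_third x y u v' v, mul_comm v' v, replace_third x y v u' v']
  rw [replace_right x y u v u' v', mul_comm, replace_right u' v' x y x' y', mul_comm]

theorem isMedial_of_essentiallyUnary (h : GeneralizedEntropic f g) (hf : EssentiallyUnary f) :
    IsMedial M := by
  intro x y u v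
  rcases hf with hf | hf
  · exact h.mul_mul_mul_const hf ..
  · exact h.swap.mul_mul_mul_const (fun y x x' => hf x x' y) ..

end GeneralizedEntropic

theorem sum_varCount (t : FreeMagma (Fin 2)) : ∑ v, varCount v t = t.length := by
  induction t with
  | ih1 w => exact Fintype.sum_ite_eq w fun _ => 1
  | ih2 a b iha ihb => exact Finset.sum_add_distrib.trans (congrArg₂ (· + ·) iha ihb)

theorem exists_eq_of_of_length_le_one {α : Type*} {t : FreeMagma α} (h : t.length ≤ 1) :
    ∃ i, t = .of i := by
  cases t with
  | of i => exact ⟨i, rfl⟩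
  | mul a b =>
    change a.length + b.length ≤ 1 at h
    have := a.length_pos
    have := b.length_pos
    omega

namespace IsLinear

theorem length_le_two {t : FreeMagma (Fin 2)} (ht : IsLinear t) : t.length ≤ 2 :=
  calc
    t.length = ∑ v, varCount v t := (sum_varCount t).symm
    _ ≤ ∑ _v : Fin 2, 1 := Finset.sum_le_sum fun v _ => ht v
    _ = 2 := rfl

theorem eq_of_or_eq_of_mul_of {t : FreeMagma (Fin 2)} (ht : IsLinear t) :
    (∃ i, t = .of i) ∨ ∃ i j, i ≠ j ∧ t = .of i * .of j := by
  cases t with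
  | of i => exact .inl ⟨i, rfl⟩
  | mul a b =>
    have length_le : a.length + b.length ≤ 2 := ht.length_le_two
    have := a.length_pos
    have := b.length_pos
    obtain ⟨i, rfl⟩ := exists_eq_of_of_length_le_one (t := a) (by omega)
    obtain ⟨j, rfl⟩ := exists_eq_of_of_length_le_one (t := b) (by omega)
    refine .inr ⟨i, j, ?_, rfl⟩
    rintro rfl
    simpa [varCount] using ht i

theorem essentiallyUnary_or_symmetric {M : Type*} [CommMagma M] {t : FreeMagma (Fin 2)}
    (ht : IsLinear t) :
    EssentiallyUnary (evalBin (M := M) t) ∨ ∀ x y : M, evalBin t x y = evalBin t y x := by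
  rcases ht.eq_of_or_eq_of_mul_of with ⟨i, rfl⟩ | ⟨i, j, hij, rfl⟩
  · left
    fin_cases i
    · exact .inl fun _ _ _ => rfl
    · exact .inr fun _ _ _ => rfl
  · right
    intro x y
    fin_cases i <;> fin_cases j
    · exact absurd rfl hij
    · exact mul_comm x y
    · exact mul_comm y x
    · exact absurd rfl hij

end IsLinear

theorem stmt_14_general {M : Type*} [CommMagma M] {f g : M → M → M}
    (h : GeneralizedEntropic f g)
    (hfg : (EssentiallyUnary f ∨ ∀ x y, f x y = f y x) ∨
      (EssentiallyUnary g ∨ ∀ x y, g x y = g y x)) :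
    IsMedial M := by
  wlog hf : EssentiallyUnary f ∨ ∀ x y, f x y = f y x generalizing f g
  · exact this h.symm hfg.symm (hfg.resolve_left hf)
  exact hf.elim h.isMedial_of_essentiallyUnary h.isMedial_of_symmetric

/-- A commutative magma satisfying the generalized entropic property with
terms `t`, `s`, at least one of which is linear or symmetric, is medial. -/
theorem stmt_14 {M : Type*} [Mul M] (hcomm : ∀ x y : M, x * y = y * x)
    (t s : FreeMagma (Fin 2))
    (hGEP : ∀ x y u v : M, (x * y) * (u * v) = evalBin t x u * evalBin s y v)
    (hts : IsLinear t ∨ IsLinear s ∨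
      (∀ x y : M, evalBin t x y = evalBin t y x) ∨
      (∀ x y : M, evalBin s x y = evalBin s y x)) :
    ∀ x y u v : M, (x * y) * (u * v) = (x * u) * (y * v) := by
  let _ : CommMagma M := { mul_comm := hcomm }
  refine stmt_14_general hGEP ?_
  rcases hts with ht | hs | ht | hs
  · exact .inl ht.essentiallyUnary_or_symmetric
  · exact .inr hs.essentiallyUnary_or_symmetric
  · exact .inl (.inr ht)
  · exact .inr (.inr hs)
end
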